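/- arXiv:2207.05625 — 3 statements merged into one kernel-verified Lean document; each statement's English description precedes it below -/
import Mathlib

section
/- Let f : ℝ → ℝ be twice differentiable on [0,1] satisfying the S-shape assumption: f(0) = 0, f(1) = 1, f′(0) = f′(1) = 0, f′(s) > 0 for 0 < s < 1, and there is s* ∈ (0,1) with f″(s) > 0 for 0 < s < s* and f″(s) < 0 for s* < s < 1; moreover there exist s^{†,1} ∈ (0, s*) and s^{†,2} ∈ (s*, 1) with f′(s^{†,1}) = f′(s^{†,2}) = 1. Then for every real Λ with Λ < 0 or Λ > 1, the secant slope from (Λ, Λ) to (s*, f(s*)) is strictly smaller than the tangent slope at s*, i.e. f′(s*) > (f(s*) − Λ)/(s* − Λ). -/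
/-!
Strict convexity to the left of the inflection point `c` and strict concavity to its right make
the tangent at `c` steeper than the chords of `f` over `[a, c]` and `[c, b]`, hence steeper than
the chord over `[a, b]`, whose slope is a weighted mean of the other two. The secant from a point
of the chord line outside the chord to `(c, f c)` runs along that line to an endpoint and then
along one of the two short chords, so its slope is a weighted mean of slopes below `f' c`.
-/

theorem affineMap_sub_eq_linear_one_mul {R : Type*} [CommRing R] (ℓ : R →ᵃ[R] R) (x y : R) :
    ℓ y - ℓ x = ℓ.linear 1 * (y - x) :=
  calc ℓ y - ℓ x = ℓ.linear ((y - x) • 1) := by simp [← vsub_eq_sub, ℓ.linearMap_vsub]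
    _ = ℓ.linear 1 * (y - x) := by rw [map_smul, smul_eq_mul, mul_comm]

section LinearOrderedField

variable {k : Type*} [Field k] [LinearOrder k] [IsStrictOrderedRing k]
  {f : k → k} {ℓ : k →ᵃ[k] k} {a b c m p : k}

theorem sub_lt_mul_sub_of_slope_lt (hab : a < b) (h : slope f a b < m) :
    f b - f a < m * (b - a) := by
  rwa [slope_def_field, div_lt_iff₀ (sub_pos.2 hab)] at h

theorem affineMap_linear_one_lt_of_slope_lt (hc : c ∈ Set.Ioo a b) (hℓa : ℓ a = f a)
    (hℓb : ℓ b = f b) (hleft : slope f a c < m) (hright : slope f c b < m) :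
    ℓ.linear 1 < m := by
  refine lt_of_mul_lt_mul_right ?_ (sub_pos.2 (hc.1.trans hc.2)).le
  calc ℓ.linear 1 * (b - a) = (f c - f a) + (f b - f c) := by
        rw [← affineMap_sub_eq_linear_one_mul, hℓa, hℓb]; ring
    _ < m * (c - a) + m * (b - c) :=
        add_lt_add (sub_lt_mul_sub_of_slope_lt hc.1 hleft)
          (sub_lt_mul_sub_of_slope_lt hc.2 hright)
    _ = m * (b - a) := by ring

theorem secant_lt_of_slope_lt_of_notMem_Ioo (hc : c ∈ Set.Ioo a b) (hℓa : ℓ a = f a)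
    (hℓb : ℓ b = f b) (hleft : slope f a c < m) (hright : slope f c b < m)
    (hp : p ∉ Set.Ioo a b) :
    (f c - ℓ p) / (c - p) < m := by
  have hchord : ℓ.linear 1 ≤ m :=
    (affineMap_linear_one_lt_of_slope_lt hc hℓa hℓb hleft hright).le
  rcases le_or_gt p a with hpa | hap
  · rw [div_lt_iff₀ (sub_pos.2 (hpa.trans_lt hc.1))]
    calc f c - ℓ p = (f c - f a) + ℓ.linear 1 * (a - p) := by
          rw [← affineMap_sub_eq_linear_one_mul, hℓa]; ring
      _ < m * (c - a) + m * (a - p) :=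
          add_lt_add_of_lt_of_le (sub_lt_mul_sub_of_slope_lt hc.1 hleft)
            (mul_le_mul_of_nonneg_right hchord (sub_nonneg.2 hpa))
      _ = m * (c - p) := by ring
  · have hbp : b ≤ p := not_lt.1 fun hpb => hp ⟨hap, hpb⟩
    rw [← neg_div_neg_eq, neg_sub, neg_sub, div_lt_iff₀ (sub_pos.2 (hc.2.trans_le hbp))]
    calc ℓ p - f c = (f b - f c) + ℓ.linear 1 * (p - b) := by
          rw [← affineMap_sub_eq_linear_one_mul, hℓb]; ring
      _ < m * (b - c) + m * (p - b) :=
          add_lt_add_of_lt_of_le (sub_lt_mul_sub_of_slope_lt hc.2 hright)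
            (mul_le_mul_of_nonneg_right hchord (sub_nonneg.2 hbp))
      _ = m * (p - c) := by ring

end LinearOrderedField

theorem secant_lt_tangent_at_inflection_general {f : ℝ → ℝ} {ℓ : ℝ →ᵃ[ℝ] ℝ} {a b c f' p : ℝ}
    (hc : c ∈ Set.Ioo a b) (hconv : StrictConvexOn ℝ (Set.Icc a c) f)
    (hconc : StrictConcaveOn ℝ (Set.Icc c b) f) (hf' : HasDerivAt f f' c)
    (hℓa : ℓ a = f a) (hℓb : ℓ b = f b) (hp : p ∉ Set.Ioo a b) :
    (f c - ℓ p) / (c - p) < f' :=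
  secant_lt_of_slope_lt_of_notMem_Ioo hc hℓa hℓb
    (hconv.slope_lt_of_hasDerivAt (Set.left_mem_Icc.2 hc.1.le) (Set.right_mem_Icc.2 hc.1.le)
      hc.1 hf')
    (hconc.slope_lt_of_hasDerivAt (Set.left_mem_Icc.2 hc.2.le) (Set.right_mem_Icc.2 hc.2.le)
      hc.2 hf') hp

/-- Sign condition in Lemma 4.2: for an S-shaped fractional flow `f` with
inflection point `s*`, and any `Λ < 0` or `Λ > 1`, the secant slope from
`(Λ, Λ)` to `(s*, f(s*))` is strictly smaller than the tangent slope at `s*`. -/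
theorem secant_lt_tangent_at_inflection (f : ℝ → ℝ) (sstar : ℝ)
    (hdiff : ∀ s ∈ Set.Icc (0 : ℝ) 1, DifferentiableAt ℝ f s)
    (hdiff2 : ∀ s ∈ Set.Icc (0 : ℝ) 1, DifferentiableAt ℝ (deriv f) s)
    (hf0 : f 0 = 0) (hf1 : f 1 = 1)
    (hd0 : deriv f 0 = 0) (hd1 : deriv f 1 = 0)
    (hdpos : ∀ s : ℝ, 0 < s → s < 1 → 0 < deriv f s)
    (hstar : sstar ∈ Set.Ioo (0 : ℝ) 1)
    (hconv : ∀ s : ℝ, 0 < s → s < sstar → 0 < deriv (deriv f) s)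
    (hconc : ∀ s : ℝ, sstar < s → s < 1 → deriv (deriv f) s < 0)
    (hdag : ∃ s1 ∈ Set.Ioo (0 : ℝ) sstar, ∃ s2 ∈ Set.Ioo sstar (1 : ℝ),
      deriv f s1 = 1 ∧ deriv f s2 = 1)
    (Λ : ℝ) (hΛ : Λ < 0 ∨ 1 < Λ) :
    (f sstar - Λ) / (sstar - Λ) < deriv f sstar := by
  have hcont : ContinuousOn f (Set.Icc 0 1) := fun s hs =>
    (hdiff s hs).continuousAt.continuousWithinAt
  have hconvex : StrictConvexOn ℝ (Set.Icc 0 sstar) f :=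
    strictConvexOn_of_deriv2_pos (convex_Icc 0 sstar)
      (hcont.mono (Set.Icc_subset_Icc_right hstar.2.le))
      (by rw [interior_Icc]; exact fun s hs => hconv s hs.1 hs.2)
  have hconcave : StrictConcaveOn ℝ (Set.Icc sstar 1) f :=
    strictConcaveOn_of_deriv2_neg (convex_Icc sstar 1)
      (hcont.mono (Set.Icc_subset_Icc_left hstar.1.le))
      (by rw [interior_Icc]; exact fun s hs => hconc s hs.1 hs.2)
  have hΛ' : Λ ∉ Set.Ioo (0 : ℝ) 1 := fun h => hΛ.elim h.1.not_gt h.2.not_gt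
  exact secant_lt_tangent_at_inflection_general (ℓ := AffineMap.id ℝ ℝ) hstar hconvex hconcave
    (hdiff sstar (Set.Ioo_subset_Icc_self hstar)).hasDerivAt hf0.symm hf1.symm hΛ'
end

section
/- Let f : ℝ → ℝ be twice differentiable on [0,1] satisfying the S-shape assumption: f(0) = 0, f(1) = 1, f′(0) = f′(1) = 0, f′(s) > 0 for 0 < s < 1, and there is s* ∈ (0,1) with f″(s) > 0 for 0 < s < s* and f″(s) < 0 for s* < s < 1; moreover there exist s^{†,1} ∈ (0, s*) and s^{†,2} ∈ (s*, 1) with f′(s^{†,1}) = f′(s^{†,2}) = 1. Then for every real Λ with Λ < 0 or Λ > 1, there exist points s¹ ∈ (0, s*) and s² ∈ (s*, 1) such that the coincidence function 𝒢_Λ(s) = f′(s) − (f(s) − Λ)/(s − Λ) vanishes at both: 𝒢_Λ(s¹) = 0 and 𝒢_Λ(s²) = 0. -/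
/-!
Away from `s = Λ`, the coincidence function is `(s - Λ)` times the derivative of
`s ↦ (f s - Λ) / (s - Λ)`, the slope of the chord from `(Λ, Λ)`. A derivative has the intermediate
value property, whether or not it is continuous, so a sign change of the coincidence function on an
interval avoiding `Λ` forces a zero inside. At the endpoints, which `f` fixes, the chord has slope
`1 > f'`. At the maximum `s*` of `f'` the tangent is steeper than the chord from `(Λ, Λ)`: this
chord slope is a weighted mean of `1` and the slope of the chord from the end of the graph on the
side of `Λ`. The latter is at most `f'(s*)` by the mean value inequality, and `1 < f'(s*)` because
`f` starts with slope below its mean slope `1`.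
-/

open Set Topology

section Derivative

variable {f f' : ℝ → ℝ} {a b m : ℝ}

theorem exists_hasDerivWithinAt_eq_zero_of_mul_neg (hab : a ≤ b)
    (hf : ∀ x ∈ Icc a b, HasDerivWithinAt f (f' x) (Icc a b) x) (h : f' a * f' b < 0) :
    ∃ c ∈ Ioo a b, f' c = 0 := by
  rcases mul_neg_iff.1 h with ⟨ha, hb⟩ | ⟨ha, hb⟩
  · exact exists_hasDerivWithinAt_eq_of_lt_of_gt hab hf ha hb
  · exact exists_hasDerivWithinAt_eq_of_gt_of_lt hab hf ha hb

theorem sub_le_mul_sub_of_hasDerivWithinAt_le {D : Set ℝ} (hD : Convex ℝ D)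
    (hf : ∀ x ∈ D, HasDerivWithinAt f (f' x) D x) (hle : ∀ x ∈ interior D, f' x ≤ m)
    {x y : ℝ} (hx : x ∈ D) (hy : y ∈ D) (hxy : x ≤ y) : f y - f x ≤ m * (y - x) := by
  have hderiv : ∀ z ∈ interior D, HasDerivAt f (f' z) z := fun z hz =>
    (hf z (interior_subset hz)).hasDerivAt (mem_interior_iff_mem_nhds.1 hz)
  refine hD.image_sub_le_mul_sub_of_deriv_le (fun z hz => (hf z hz).continuousWithinAt)
    (fun z hz => (hderiv z hz).differentiableAt.differentiableWithinAt) (fun z hz => ?_)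
    x hx y hy hxy
  rw [(hderiv z hz).deriv]
  exact hle z hz

theorem slope_lt_of_hasDerivWithinAt_le_of_left_lt (hab : a < b)
    (hf : ∀ x ∈ Icc a b, HasDerivWithinAt f (f' x) (Icc a b) x)
    (hle : ∀ x ∈ Ioo a b, f' x ≤ m) (ha : f' a < slope f a b) : slope f a b < m := by
  have hderiv : HasDerivWithinAt f (f' a) (Ioo a b) a :=
    (hf a (left_mem_Icc.2 hab.le)).mono Ioo_subset_Icc_self
  have : (𝓝[Ioo a b] a).NeBot := left_nhdsWithin_Ioo_neBot hab
  obtain ⟨z, hslope, hz⟩ :=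
    ((hderiv.limsup_slope_le' left_notMem_Ioo ha).and self_mem_nhdsWithin).exists
  have hchord_left : f z - f a < slope f a b * (z - a) := by
    rwa [slope_def_field, div_lt_iff₀ (sub_pos.2 hz.1)] at hslope
  have hchord_right : f b - f z ≤ m * (b - z) :=
    sub_le_mul_sub_of_hasDerivWithinAt_le (convex_Icc a b) hf (by rwa [interior_Icc])
      (Ioo_subset_Icc_self hz) (right_mem_Icc.2 hab.le) hz.2.le
  have hchord : f b - f a = slope f a b * (b - a) := by
    rw [slope_def_field, div_mul_cancel₀ _ (sub_pos.2 hab).ne']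
  have : slope f a b * (b - z) < m * (b - z) := by linarith
  exact lt_of_mul_lt_mul_right this (sub_pos.2 hz.2).le

theorem isMaxOn_Icc_of_deriv_pos_of_deriv_neg {c : ℝ} (hf : ContinuousOn f (Icc a b))
    (hc : c ∈ Icc a b) (hpos : ∀ x ∈ Ioo a c, 0 < deriv f x)
    (hneg : ∀ x ∈ Ioo c b, deriv f x < 0) : IsMaxOn f (Icc a b) c :=
  isMaxOn_Icc_of_mono_anti
    (strictMonoOn_of_deriv_pos (convex_Icc a c) (hf.mono (Icc_subset_Icc_right hc.2))
      (by rwa [interior_Icc])).monotoneOn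
    (strictAntiOn_of_deriv_neg (convex_Icc c b) (hf.mono (Icc_subset_Icc_left hc.1))
      (by rwa [interior_Icc])).antitoneOn

end Derivative

/-- The function `𝒢_Λ(s) = f'(s) - (f(s) - Λ) / (s - Λ)`, whose zeros are the saturations at which
the Buckley–Leverett and the chemical speeds coincide. The derivative is a separate argument `f'`,
so that it may be one-sided at the ends of the saturation interval. -/
noncomputable def coincidenceFun (f f' : ℝ → ℝ) (Λ s : ℝ) : ℝ :=
  f' s - (f s - Λ) / (s - Λ)

section Coincidence

variable {f f' : ℝ → ℝ} {a b c Λ m s : ℝ} {S : Set ℝ}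

theorem hasDerivWithinAt_chord_slope (hs : s ≠ Λ) (hf : HasDerivWithinAt f (f' s) S s) :
    HasDerivWithinAt (fun x => (f x - Λ) / (x - Λ)) (coincidenceFun f f' Λ s / (s - Λ)) S s := by
  have hne : s - Λ ≠ 0 := sub_ne_zero.2 hs
  refine ((hf.sub_const Λ).fun_div ((hasDerivWithinAt_id s S).sub_const Λ) hne).congr_deriv ?_
  simp only [coincidenceFun, id_eq]
  field_simp

theorem sub_mul_sub_pos_of_notMem_Icc (hab : a ≤ b) (hΛ : Λ ∉ Icc a b) :
    0 < (a - Λ) * (b - Λ) := by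
  rcases lt_or_ge Λ a with ha | ha
  · exact mul_pos (sub_pos.2 ha) (sub_pos.2 (ha.trans_le hab))
  · have hb : b < Λ := lt_of_not_ge fun hb => hΛ ⟨ha, hb⟩
    exact mul_pos_of_neg_of_neg (sub_neg.2 (hab.trans_lt hb)) (sub_neg.2 hb)

theorem exists_coincidenceFun_eq_zero (hab : a ≤ b)
    (hf : ∀ s ∈ Icc a b, HasDerivWithinAt f (f' s) (Icc a b) s) (hΛ : Λ ∉ Icc a b)
    (hsign : coincidenceFun f f' Λ a * coincidenceFun f f' Λ b < 0) :
    ∃ s ∈ Ioo a b, coincidenceFun f f' Λ s = 0 := by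
  have hne : ∀ s ∈ Icc a b, s ≠ Λ := fun s hs => ne_of_mem_of_not_mem hs hΛ
  have hsign_chord :
      coincidenceFun f f' Λ a / (a - Λ) * (coincidenceFun f f' Λ b / (b - Λ)) < 0 := by
    rw [div_mul_div_comm]
    exact div_neg_of_neg_of_pos hsign (sub_mul_sub_pos_of_notMem_Icc hab hΛ)
  obtain ⟨s, hs, hzero⟩ := exists_hasDerivWithinAt_eq_zero_of_mul_neg hab
    (fun s hs => hasDerivWithinAt_chord_slope (hne s hs) (hf s hs)) hsign_chord
  have hs' : s - Λ ≠ 0 := sub_ne_zero.2 (hne s (Ioo_subset_Icc_self hs))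
  exact ⟨s, hs, (div_eq_zero_iff.1 hzero).resolve_right hs'⟩

theorem coincidenceFun_neg_of_fixed (hs : f s = s) (hs' : f' s < 1) (hΛ : s ≠ Λ) :
    coincidenceFun f f' Λ s < 0 := by
  rw [coincidenceFun, hs, div_self (sub_ne_zero.2 hΛ)]
  exact sub_neg.2 hs'

theorem chord_slope_lt (ha : f a = a) (hb : f b = b) (hc : c ∈ Icc a b) (hΛ : Λ ∉ Icc a b)
    (hm : 1 < m) (hleft : f c - f a ≤ m * (c - a)) (hright : f b - f c ≤ m * (b - c)) :
    (f c - Λ) / (c - Λ) < m := by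
  rw [ha] at hleft
  rw [hb] at hright
  rcases lt_or_ge Λ a with hΛa | hΛa
  · rw [div_lt_iff₀ (sub_pos.2 (hΛa.trans_le hc.1))]
    have : 1 * (a - Λ) < m * (a - Λ) := mul_lt_mul_of_pos_right hm (sub_pos.2 hΛa)
    linarith
  · have hΛb : b < Λ := lt_of_not_ge fun hΛb => hΛ ⟨hΛa, hΛb⟩
    rw [div_lt_iff_of_neg (sub_neg.2 (hc.2.trans_lt hΛb))]
    have : 1 * (Λ - b) < m * (Λ - b) := mul_lt_mul_of_pos_right hm (sub_pos.2 hΛb)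
    linarith

theorem coincidenceFun_pos_of_isMaxOn (hab : a < b)
    (hf : ∀ s ∈ Icc a b, HasDerivWithinAt f (f' s) (Icc a b) s)
    (ha : f a = a) (hb : f b = b) (ha' : f' a < 1) (hc : c ∈ Icc a b)
    (hmax : IsMaxOn f' (Icc a b) c) (hΛ : Λ ∉ Icc a b) : 0 < coincidenceFun f f' Λ c := by
  have hslope : slope f a b = 1 := by
    rw [slope_def_field, ha, hb, div_self (sub_pos.2 hab).ne']
  have hsteep : 1 < f' c := hslope ▸ slope_lt_of_hasDerivWithinAt_le_of_left_lt hab hf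
    (fun s hs => hmax (Ioo_subset_Icc_self hs)) (hslope ▸ ha')
  have hmean : ∀ {x y}, x ∈ Icc a b → y ∈ Icc a b → x ≤ y → f y - f x ≤ f' c * (y - x) :=
    sub_le_mul_sub_of_hasDerivWithinAt_le (convex_Icc a b) hf
      (fun s hs => hmax (interior_subset hs))
  exact sub_pos.2 (chord_slope_lt ha hb hc hΛ hsteep
    (hmean (left_mem_Icc.2 hab.le) hc hc.1) (hmean hc (right_mem_Icc.2 hab.le) hc.2))

theorem coincidence_locus_exists_general
    (hf : ∀ s ∈ Icc a b, HasDerivWithinAt f (f' s) (Icc a b) s)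
    (ha : f a = a) (hb : f b = b) (ha' : f' a < 1) (hb' : f' b < 1)
    (hc : c ∈ Ioo a b) (hmax : IsMaxOn f' (Icc a b) c) (hΛ : Λ ∉ Icc a b) :
    ∃ s₁ ∈ Ioo a c, ∃ s₂ ∈ Ioo c b,
      coincidenceFun f f' Λ s₁ = 0 ∧ coincidenceFun f f' Λ s₂ = 0 := by
  have hab : a < b := hc.1.trans hc.2
  have hneg_a : coincidenceFun f f' Λ a < 0 :=
    coincidenceFun_neg_of_fixed ha ha' (ne_of_mem_of_not_mem (left_mem_Icc.2 hab.le) hΛ)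
  have hneg_b : coincidenceFun f f' Λ b < 0 :=
    coincidenceFun_neg_of_fixed hb hb' (ne_of_mem_of_not_mem (right_mem_Icc.2 hab.le) hΛ)
  have hpos_c : 0 < coincidenceFun f f' Λ c :=
    coincidenceFun_pos_of_isMaxOn hab hf ha hb ha' (Ioo_subset_Icc_self hc) hmax hΛ
  have hleft : Icc a c ⊆ Icc a b := Icc_subset_Icc_right hc.2.le
  have hright : Icc c b ⊆ Icc a b := Icc_subset_Icc_left hc.1.le
  obtain ⟨s₁, hs₁, hzero₁⟩ := exists_coincidenceFun_eq_zero hc.1.le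
    (fun s hs => (hf s (hleft hs)).mono hleft) (notMem_subset hleft hΛ)
    (mul_neg_of_neg_of_pos hneg_a hpos_c)
  obtain ⟨s₂, hs₂, hzero₂⟩ := exists_coincidenceFun_eq_zero hc.2.le
    (fun s hs => (hf s (hright hs)).mono hright) (notMem_subset hright hΛ)
    (mul_neg_of_pos_of_neg hpos_c hneg_b)
  exact ⟨s₁, hs₁, s₂, hs₂, hzero₁, hzero₂⟩

end Coincidence

/-- Existence part of Lemma 4.2 (lema1): for an S-shaped fractional flow `f`
with inflection point `s*`, and any `Λ < 0` or `Λ > 1`, the coincidence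
function `𝒢_Λ(s) = f′(s) − (f(s) − Λ)/(s − Λ)` vanishes at some point in
`(0, s*)` and at some point in `(s*, 1)`. -/
theorem coincidence_locus_exists (f : ℝ → ℝ) (sstar : ℝ)
    (hdiff : ∀ s ∈ Set.Icc (0 : ℝ) 1, DifferentiableAt ℝ f s)
    (hdiff2 : ∀ s ∈ Set.Icc (0 : ℝ) 1, DifferentiableAt ℝ (deriv f) s)
    (hf0 : f 0 = 0) (hf1 : f 1 = 1)
    (hd0 : deriv f 0 = 0) (hd1 : deriv f 1 = 0)
    (hdpos : ∀ s : ℝ, 0 < s → s < 1 → 0 < deriv f s)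
    (hstar : sstar ∈ Set.Ioo (0 : ℝ) 1)
    (hconv : ∀ s : ℝ, 0 < s → s < sstar → 0 < deriv (deriv f) s)
    (hconc : ∀ s : ℝ, sstar < s → s < 1 → deriv (deriv f) s < 0)
    (hdag : ∃ s1 ∈ Set.Ioo (0 : ℝ) sstar, ∃ s2 ∈ Set.Ioo sstar (1 : ℝ),
      deriv f s1 = 1 ∧ deriv f s2 = 1)
    (Λ : ℝ) (hΛ : Λ < 0 ∨ 1 < Λ) :
    ∃ s1 ∈ Set.Ioo (0 : ℝ) sstar, ∃ s2 ∈ Set.Ioo sstar (1 : ℝ),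
      deriv f s1 - (f s1 - Λ) / (s1 - Λ) = 0 ∧
      deriv f s2 - (f s2 - Λ) / (s2 - Λ) = 0 := by
  have hmax := isMaxOn_Icc_of_deriv_pos_of_deriv_neg
    (fun s hs => (hdiff2 s hs).continuousAt.continuousWithinAt) (Ioo_subset_Icc_self hstar)
    (fun s hs => hconv s hs.1 hs.2) (fun s hs => hconc s hs.1 hs.2)
  exact coincidence_locus_exists_general (fun s hs => (hdiff s hs).hasDerivAt.hasDerivWithinAt)
    hf0 hf1 (hd0.trans_lt one_pos) (hd1.trans_lt one_pos) hstar hmax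
    (fun h => hΛ.elim h.1.not_gt h.2.not_gt)
end

section
/- Let f : ℝ → ℝ be twice differentiable on [0,1] satisfying the S-shape assumption: f(0) = 0, f(1) = 1, f′(0) = f′(1) = 0, f′(s) > 0 for 0 < s < 1, and there is s* ∈ (0,1) with f″(s) > 0 for 0 < s < s* and f″(s) < 0 for s* < s < 1. Let Λ be a real number with Λ < 0 or Λ > 1, and set 𝒢_Λ(s) = f′(s) − (f(s) − Λ)/(s − Λ). Then 𝒢_Λ has at most one zero in the interval (0, s*) and at most one zero in the interval (s*, 1). -/
/-!
A zero of `𝒢_Λ` is a point at which the tangent line to the graph of `f` passes through `(Λ, Λ)`.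
If two tangents through `(c, d)` touch a strictly convex graph at `a ≠ b`, then each lies strictly
below the graph at the other's contact point. Both lines are pinned at `c`, so the two
inequalities force the sign of the difference of the slopes in opposite ways as soon as `a` and
`b` lie on the same side of `c`. The concave branch follows by reflection.
-/

open Set

lemma sub_mul_sub_pos_of_ordConnected {R : Type*} [Ring R] [LinearOrder R] [IsStrictOrderedRing R]
    {S : Set R} [S.OrdConnected] {a b c : R} (ha : a ∈ S) (hb : b ∈ S) (hc : c ∉ S) :
    0 < (a - c) * (b - c) := by
  have not_between {x y : R} (hx : x ∈ S) (hy : y ∈ S) (hxc : x ≤ c) (hcy : c ≤ y) : False :=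
    hc (S.Icc_subset hx hy ⟨hxc, hcy⟩)
  rcases lt_or_ge a c with hac | hca
  · have hbc : b < c := not_le.mp (not_between ha hb hac.le)
    exact mul_pos_of_neg_of_neg (sub_neg.mpr hac) (sub_neg.mpr hbc)
  · have hca' : c < a := hca.lt_of_ne (ne_of_mem_of_not_mem ha hc).symm
    have hcb : c < b := not_le.mp fun hbc => not_between hb ha hbc hca
    exact mul_pos (sub_pos.mpr hca') (sub_pos.mpr hcb)

/-- The points of `S` at which the graph of `f` over `S` has a tangent line through `(c, d)`.
Meant for `c ∉ S`: at `s = c` the quotient takes the junk value `0`. -/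
def tangentPoints (f : ℝ → ℝ) (S : Set ℝ) (c d : ℝ) : Set ℝ :=
  {s ∈ S | HasDerivWithinAt f ((f s - d) / (s - c)) S s}

section StrictConvexity

variable {f : ℝ → ℝ} {S : Set ℝ}

lemma tangent_lt_of_strictConvexOn (hf : StrictConvexOn ℝ S f) {x y m : ℝ} (hx : x ∈ S)
    (hy : y ∈ S) (hxy : x ≠ y) (hm : HasDerivWithinAt f m S x) : f x + m * (y - x) < f y := by
  rcases hxy.lt_or_gt with h | h
  · have hslope := hf.lt_slope_of_hasDerivWithinAt hx hy h hm
    rw [slope_def_field, lt_div_iff₀ (sub_pos.mpr h)] at hslope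
    linarith
  · have hslope := hf.slope_lt_of_hasDerivWithinAt hy hx h hm
    rw [slope_def_field, div_lt_iff₀ (sub_pos.mpr h)] at hslope
    linarith

lemma subsingleton_tangentPoints_of_strictConvexOn (hf : StrictConvexOn ℝ S f) {c : ℝ}
    (hc : c ∉ S) (d : ℝ) :
    (tangentPoints f S c d).Subsingleton := by
  rintro a ⟨ha, hma⟩ b ⟨hb, hmb⟩
  by_contra hab
  have : S.OrdConnected := hf.1.ordConnected
  have hside : 0 < (a - c) * (b - c) := sub_mul_sub_pos_of_ordConnected ha hb hc
  have value_eq {s : ℝ} (hs : s ∈ S) : f s = d + (f s - d) / (s - c) * (s - c) := by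
    rw [div_mul_cancel₀ _ (sub_ne_zero.mpr (ne_of_mem_of_not_mem hs hc)), add_sub_cancel]
  have hbelow_b := tangent_lt_of_strictConvexOn hf ha hb hab hma
  have hbelow_a := tangent_lt_of_strictConvexOn hf hb ha (Ne.symm hab) hmb
  have hfa := value_eq ha
  have hfb := value_eq hb
  set p := (f a - d) / (a - c)
  set q := (f b - d) / (b - c)
  have hpq_b : (p - q) * (b - c) < 0 := by linarith
  have hqp_a : (q - p) * (a - c) < 0 := by linarith
  have hprod : 0 < -((p - q) ^ 2 * ((a - c) * (b - c))) := by
    linear_combination mul_pos_of_neg_of_neg hpq_b hqp_a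
  exact (neg_pos.mp hprod).not_ge (mul_nonneg (sq_nonneg _) hside.le)

lemma subsingleton_tangentPoints_of_strictConcaveOn (hf : StrictConcaveOn ℝ S f) {c : ℝ}
    (hc : c ∉ S) (d : ℝ) :
    (tangentPoints f S c d).Subsingleton := by
  refine (subsingleton_tangentPoints_of_strictConvexOn hf.neg hc (-d)).anti ?_
  rintro s ⟨hs, hm⟩
  refine ⟨hs, hm.neg.congr_deriv ?_⟩
  rw [Pi.neg_apply, ← neg_div]
  ring

end StrictConvexity

theorem coincidence_locus_unique_general {f : ℝ → ℝ} {α σ β c : ℝ} (hσ : σ ∈ Icc α β)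
    (hdiff : ∀ s ∈ Ioo α β, DifferentiableAt ℝ f s)
    (hconv : ∀ s, α < s → s < σ → 0 < deriv (deriv f) s)
    (hconc : ∀ s, σ < s → s < β → deriv (deriv f) s < 0)
    (hc : c ∉ Ioo α β) (d : ℝ) :
    (∀ a ∈ Ioo α σ, ∀ b ∈ Ioo α σ,
      deriv f a - (f a - d) / (a - c) = 0 →
      deriv f b - (f b - d) / (b - c) = 0 → a = b) ∧
    (∀ a ∈ Ioo σ β, ∀ b ∈ Ioo σ β,
      deriv f a - (f a - d) / (a - c) = 0 →
      deriv f b - (f b - d) / (b - c) = 0 → a = b) := by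
  have hleft : Ioo α σ ⊆ Ioo α β := Ioo_subset_Ioo_right hσ.2
  have hright : Ioo σ β ⊆ Ioo α β := Ioo_subset_Ioo_left hσ.1
  have hcont : ContinuousOn f (Ioo α β) := fun s hs =>
    (hdiff s hs).continuousAt.continuousWithinAt
  have hconvex : StrictConvexOn ℝ (Ioo α σ) f := strictConvexOn_of_deriv2_pos' (convex_Ioo α σ)
    (hcont.mono hleft) fun s hs => hconv s hs.1 hs.2
  have hconcave : StrictConcaveOn ℝ (Ioo σ β) f := strictConcaveOn_of_deriv2_neg' (convex_Ioo σ β)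
    (hcont.mono hright) fun s hs => hconc s hs.1 hs.2
  have mem_tangentPoints {S : Set ℝ} (hS : S ⊆ Ioo α β) {s : ℝ} (hs : s ∈ S)
      (h : deriv f s - (f s - d) / (s - c) = 0) : s ∈ tangentPoints f S c d :=
    ⟨hs, ((hdiff s (hS hs)).hasDerivAt.congr_deriv (sub_eq_zero.mp h)).hasDerivWithinAt⟩
  exact ⟨fun a ha b hb hga hgb =>
      subsingleton_tangentPoints_of_strictConvexOn hconvex (notMem_subset hleft hc) d
        (mem_tangentPoints hleft ha hga) (mem_tangentPoints hleft hb hgb),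
    fun a ha b hb hga hgb =>
      subsingleton_tangentPoints_of_strictConcaveOn hconcave (notMem_subset hright hc) d
        (mem_tangentPoints hright ha hga) (mem_tangentPoints hright hb hgb)⟩

/-- Uniqueness part of Lemma 4.2 (lema1): for an S-shaped fractional flow `f`
with inflection point `s*`, and any `Λ < 0` or `Λ > 1`, the coincidence
function `𝒢_Λ(s) = f′(s) − (f(s) − Λ)/(s − Λ)` has at most one zero in
`(0, s*)` and at most one zero in `(s*, 1)`. -/
theorem coincidence_locus_unique (f : ℝ → ℝ) (sstar : ℝ)
    (hdiff : ∀ s ∈ Set.Icc (0 : ℝ) 1, DifferentiableAt ℝ f s)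
    (hdiff2 : ∀ s ∈ Set.Icc (0 : ℝ) 1, DifferentiableAt ℝ (deriv f) s)
    (hf0 : f 0 = 0) (hf1 : f 1 = 1)
    (hd0 : deriv f 0 = 0) (hd1 : deriv f 1 = 0)
    (hdpos : ∀ s : ℝ, 0 < s → s < 1 → 0 < deriv f s)
    (hstar : sstar ∈ Set.Ioo (0 : ℝ) 1)
    (hconv : ∀ s : ℝ, 0 < s → s < sstar → 0 < deriv (deriv f) s)
    (hconc : ∀ s : ℝ, sstar < s → s < 1 → deriv (deriv f) s < 0)
    (Λ : ℝ) (hΛ : Λ < 0 ∨ 1 < Λ) :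
    (∀ a ∈ Set.Ioo (0 : ℝ) sstar, ∀ b ∈ Set.Ioo (0 : ℝ) sstar,
      deriv f a - (f a - Λ) / (a - Λ) = 0 →
      deriv f b - (f b - Λ) / (b - Λ) = 0 → a = b) ∧
    (∀ a ∈ Set.Ioo sstar (1 : ℝ), ∀ b ∈ Set.Ioo sstar (1 : ℝ),
      deriv f a - (f a - Λ) / (a - Λ) = 0 →
      deriv f b - (f b - Λ) / (b - Λ) = 0 → a = b) :=
  coincidence_locus_unique_general (Ioo_subset_Icc_self hstar)
    (fun s hs => hdiff s (Ioo_subset_Icc_self hs)) hconv hconc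
    (fun h => hΛ.elim h.1.not_gt h.2.not_gt) Λ
end
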